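/- arXiv:1404.7065 — 2 statements merged into one kernel-verified Lean document; each statement's English description precedes it below -/
import Mathlib

section
/- Let A ∈ (0,1), let w ∈ ℂ satisfy Re w > √(1−A²) and |Im w| < A, let α ∈ [A,1), set ρ = (1−α²)^{1/2}, C = √((1+A)/(1−A)), and let B(α,w) be the real 2×2 matrix (1/ρ)·[[(1−α)·Re w, −(1−α)·Im w], [(1+α)·Im w, (1+α)·Re w]]. If x, y ∈ ℝ satisfy y > C·|x| and (x̃, ỹ) = B(α,w)·(x, y), then ỹ > C·|x̃|. -/
/-!
The matrix `B(α, w)` is multiplication by `w` followed by the dilation `diag(1 - α, 1 + α) / ρ`.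
The cone `y > C |x|` has half-angle `θ` about the `y`-axis, where `cot θ = C`, and the choice of
`C` means `cos 2θ = A`. The conditions on `w` give `|arg w| ≤ π / 2 - 2θ`, so multiplication by
`w` moves the cone into the one of half-angle `π / 2 - θ`, whose slope is `C⁻¹`. The dilation then
multiplies slopes by `(1 + α) / (1 - α) ≥ (1 + A) / (1 - A) = C ^ 2`, which restores the slope `C`.
-/

open Matrix Set

section UpperCone

variable {K : Type*} [Field K] [LinearOrder K] [IsStrictOrderedRing K]

/-- The open cone `y > c |x|` about the positive `y`-axis, with boundary rays of slope `± c`;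
coordinates `0` and `1` of a vector are `x` and `y`. -/
def upperCone (c : K) : Set (Fin 2 → K) := {u | c * |u 0| < u 1}

theorem upperCone_antitone : Antitone (upperCone : K → Set (Fin 2 → K)) :=
  fun _ _ hcd _ hu => (mul_le_mul_of_nonneg_right hcd (abs_nonneg _)).trans_lt hu

theorem smul_mem_upperCone {c t : K} (ht : 0 < t) {u : Fin 2 → K} (hu : u ∈ upperCone c) :
    t • u ∈ upperCone c := by
  change c * |t * u 0| < t * u 1
  calc c * |t * u 0| = t * (c * |u 0|) := by rw [abs_mul, abs_of_pos ht]; ring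
    _ < t * u 1 := mul_lt_mul_of_pos_left hu ht

theorem diagonal_mulVec_mem_upperCone {c a b : K} (ha : 0 < a) (hb : 0 < b) {u : Fin 2 → K}
    (hu : u ∈ upperCone c) : diagonal ![a, b] *ᵥ u ∈ upperCone (c * (b / a)) := by
  change c * (b / a) * |(diagonal ![a, b] *ᵥ u) 0| < (diagonal ![a, b] *ᵥ u) 1
  simp only [mulVec_diagonal, cons_val_zero, cons_val_one]
  calc c * (b / a) * |a * u 0| = b * (c * |u 0|) := by
        rw [abs_mul, abs_of_pos ha]; field_simp
    _ < b * u 1 := mul_lt_mul_of_pos_left hu hb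

/-- The condition `hs` reads `|arg (r + i s)| ≤ arctan c - arctan d`, by the subtraction formula
for the tangent. -/
theorem conformal_mulVec_mem_upperCone {c d r s : K} (hc : 0 ≤ c) (hd : 0 ≤ d) (hr : 0 < r)
    (hs : |s| * (1 + c * d) ≤ (c - d) * r) {u : Fin 2 → K} (hu : u ∈ upperCone c) :
    !![r, -s; s, r] *ᵥ u ∈ upperCone d := by
  obtain ⟨x, y, rfl⟩ : ∃ x y, u = ![x, y] := ⟨u 0, u 1, (FinVec.etaExpand_eq u).symm⟩
  replace hu : c * |x| < y := hu
  have hy : 0 < y := (mul_nonneg hc (abs_nonneg x)).trans_lt hu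
  have hpos : 0 < r - d * |s| := by
    refine pos_of_mul_pos_right (a := 1 + c * d) ?_ (by positivity)
    calc 0 < (1 + d ^ 2) * r := by positivity
      _ = (1 + c * d) * r - d * ((c - d) * r) := by ring
      _ ≤ (1 + c * d) * r - d * (|s| * (1 + c * d)) := by gcongr
      _ = (1 + c * d) * (r - d * |s|) := by ring
  have habs : |r * x - s * y| ≤ r * |x| + |s| * y := by
    simpa only [abs_mul, abs_of_pos hr, abs_of_pos hy] using abs_sub (r * x) (s * y)
  have hsx : -(|s| * |x|) ≤ s * x := abs_mul s x ▸ neg_abs_le (s * x)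
  have hslope : d * r + |s| ≤ c * (r - d * |s|) := by linear_combination hs
  have hmulVec : !![r, -s; s, r] *ᵥ ![x, y] = ![r * x - s * y, s * x + r * y] := by
    ext i
    fin_cases i <;> simp [sub_eq_add_neg, mul_comm]
  rw [hmulVec]
  change d * |r * x - s * y| < s * x + r * y
  calc d * |r * x - s * y| ≤ d * (r * |x| + |s| * y) := by gcongr
    _ = (d * r + |s|) * |x| - |s| * |x| + d * |s| * y := by ring
    _ ≤ c * (r - d * |s|) * |x| - |s| * |x| + d * |s| * y := by gcongr
    _ = (r - d * |s|) * (c * |x|) - |s| * |x| + d * |s| * y := by ring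
    _ < (r - d * |s|) * y - |s| * |x| + d * |s| * y := by gcongr
    _ = -(|s| * |x|) + r * y := by ring
    _ ≤ s * x + r * y := by gcongr

end UpperCone

/-- The conjugated Szegő transfer matrix `B(α, w)`, normalized by `ρ = √(1 - α ^ 2)`; it is
parametrized by the square root `w` of the spectral parameter. -/
noncomputable def szegoMatrix (α : ℝ) (w : ℂ) : Matrix (Fin 2) (Fin 2) ℝ :=
  (1 / √(1 - α ^ 2)) •
    !![(1 - α) * w.re, -((1 - α) * w.im); (1 + α) * w.im, (1 + α) * w.re]

theorem szegoMatrix_eq_smul_diagonal_mul (α : ℝ) (w : ℂ) :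
    szegoMatrix α w =
      (1 / √(1 - α ^ 2)) • (diagonal ![1 - α, 1 + α] * !![w.re, -w.im; w.im, w.re]) := by
  rw [szegoMatrix]
  congr 1
  ext i j
  fin_cases i <;> fin_cases j <;> simp [diagonal_mul]

theorem szegoMatrix_mulVec_mem_upperCone {α c d : ℝ} {w : ℂ} (hα : α ∈ Ioo (-1) 1) (hc : 0 ≤ c)
    (hd : 0 ≤ d) (hre : 0 < w.re) (him : |w.im| * (1 + c * d) ≤ (c - d) * w.re)
    {u : Fin 2 → ℝ} (hu : u ∈ upperCone c) :
    szegoMatrix α w *ᵥ u ∈ upperCone (d * ((1 + α) / (1 - α))) := by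
  have hsub : 0 < 1 - α := sub_pos.2 hα.2
  have hadd : 0 < 1 + α := neg_lt_iff_pos_add'.1 hα.1
  have hρ : 0 < √(1 - α ^ 2) :=
    Real.sqrt_pos.2 (by linear_combination mul_pos hsub hadd)
  rw [szegoMatrix_eq_smul_diagonal_mul, smul_mulVec, ← mulVec_mulVec]
  exact smul_mem_upperCone (one_div_pos.2 hρ) <| diagonal_mulVec_mem_upperCone hsub hadd <|
    conformal_mulVec_mem_upperCone hc hd hre him hu

theorem szegoMatrix_mulVec_mem_upperCone_self {α c : ℝ} {w : ℂ} (hα : α ∈ Ioo (-1) 1)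
    (hc : 0 < c) (hcα : c ^ 2 ≤ (1 + α) / (1 - α)) (hre : 0 < w.re)
    (him : 2 * |w.im| ≤ (c - c⁻¹) * w.re) {u : Fin 2 → ℝ} (hu : u ∈ upperCone c) :
    szegoMatrix α w *ᵥ u ∈ upperCone c := by
  have hsector : |w.im| * (1 + c * c⁻¹) ≤ (c - c⁻¹) * w.re := by
    rw [mul_inv_cancel₀ hc.ne']
    linear_combination him
  have hslope : c ≤ c⁻¹ * ((1 + α) / (1 - α)) := by
    rwa [le_inv_mul_iff₀ hc, ← pow_two]
  exact upperCone_antitone hslope <|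
    szegoMatrix_mulVec_mem_upperCone hα hc.le (inv_nonneg.2 hc.le) hre hsector hu

theorem sqrt_one_add_div_one_sub {a : ℝ} (ha : -1 < a) :
    √((1 + a) / (1 - a)) = (1 + a) / √(1 - a ^ 2) := by
  have hadd : 0 < 1 + a := neg_lt_iff_pos_add'.1 ha
  calc √((1 + a) / (1 - a)) = √((1 + a) ^ 2 / ((1 + a) * (1 - a))) := by
        rw [pow_two, mul_div_mul_left _ _ hadd.ne']
    _ = √((1 + a) ^ 2 / (1 - a ^ 2)) := by ring_nf
    _ = (1 + a) / √(1 - a ^ 2) := by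
        rw [Real.sqrt_div (sq_nonneg _), Real.sqrt_sq hadd.le]

theorem sqrt_one_add_div_one_sub_sub_inv {a : ℝ} (ha : a ∈ Ioo (-1) 1) :
    √((1 + a) / (1 - a)) - (√((1 + a) / (1 - a)))⁻¹ = 2 * a / √(1 - a ^ 2) := by
  have hinv : (√((1 + a) / (1 - a)))⁻¹ = (1 - a) / √(1 - a ^ 2) := by
    simpa [← Real.sqrt_inv, ← sub_eq_add_neg] using
      sqrt_one_add_div_one_sub (neg_lt_neg ha.2)
  rw [hinv, sqrt_one_add_div_one_sub ha.1]
  ring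

theorem szego_cone_invariance_general {A α : ℝ} {w : ℂ} (hα : α ∈ Ico A 1) (hre : 0 < w.re)
    (him : |w.im| * √(1 - A ^ 2) ≤ A * w.re) {u : Fin 2 → ℝ}
    (hu : u ∈ upperCone √((1 + A) / (1 - A))) :
    szegoMatrix α w *ᵥ u ∈ upperCone √((1 + A) / (1 - A)) := by
  obtain ⟨hAα, hα1⟩ := hα
  have hA0 : 0 ≤ A := nonneg_of_mul_nonneg_left
    ((mul_nonneg (abs_nonneg _) (Real.sqrt_nonneg _)).trans him) hre
  have hA1 : A < 1 := hAα.trans_lt hα1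
  have hdiv : 0 < (1 + A) / (1 - A) := div_pos (by linarith) (by linarith)
  have hslope : √((1 + A) / (1 - A)) ^ 2 ≤ (1 + α) / (1 - α) := by
    rw [Real.sq_sqrt hdiv.le]
    exact div_le_div₀ (by linarith) (by linarith) (by linarith) (by linarith)
  have hsector : 2 * |w.im| ≤ (√((1 + A) / (1 - A)) - (√((1 + A) / (1 - A)))⁻¹) * w.re := by
    have hsqrt : 0 < √(1 - A ^ 2) :=
      Real.sqrt_pos.2 (sub_pos.2 (pow_lt_one₀ hA0 hA1 two_ne_zero))
    rw [sqrt_one_add_div_one_sub_sub_inv ⟨by linarith, hA1⟩, div_mul_eq_mul_div, le_div_iff₀ hsqrt]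
    linear_combination 2 * him
  exact szegoMatrix_mulVec_mem_upperCone_self ⟨by linarith, hα1⟩ (Real.sqrt_pos.2 hdiv) hslope
    hre hsector hu

/-- **Cone invariance for the conjugated Szegő transfer matrix** (Lemma 2.2(a)).
If `A ∈ (0,1)`, `Re w > √(1−A²)`, `|Im w| < A`, `α ∈ [A,1)`,
`ρ = (1−α²)^{1/2}`, `C = √((1+A)/(1−A))`, and `(x̃, ỹ) = B(α,w)·(x,y)` where
`B(α,w) = (1/ρ)·[[(1−α)Re w, −(1−α)Im w], [(1+α)Im w, (1+α)Re w]]`,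
then `y > C·|x|` implies `ỹ > C·|x̃|`. -/
theorem szego_cone_invariance
    (A : ℝ) (hA : A ∈ Set.Ioo (0 : ℝ) 1)
    (w : ℂ) (hwre : Real.sqrt (1 - A ^ 2) < w.re) (hwim : |w.im| < A)
    (α : ℝ) (hα : α ∈ Set.Ico A 1)
    (ρ C : ℝ) (hρ : ρ = Real.sqrt (1 - α ^ 2)) (hC : C = Real.sqrt ((1 + A) / (1 - A)))
    (x y : ℝ) (hxy : y > C * |x|)
    (v : Fin 2 → ℝ)
    (hv : v = Matrix.mulVec
      ((1 / ρ) • !![(1 - α) * w.re, -((1 - α) * w.im); (1 + α) * w.im, (1 + α) * w.re])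
      ![x, y]) :
    v 1 > C * |v 0| := by
  subst hρ hC hv
  exact szego_cone_invariance_general hα ((Real.sqrt_nonneg _).trans_lt hwre)
    (mul_le_mul hwim.le hwre.le (Real.sqrt_nonneg _) hA.1.le) hxy
end

section
/- Let (J_j)_{j≥1} be a sequence of positive real numbers, let τ > 0 and k_B > 0, and suppose α ∈ (0,1) satisfies α ≤ e^{−2J_j/(k_B·τ)} for all j ≥ 1. Then for every N ≥ 1 and every H ∈ ℂ with e^{2H/(k_B·τ)} ∈ R_α, the partition function satisfies Z_τ^{(N)}(H) ≠ 0. -/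
noncomputable section

/-- The spin value `±1` of a Boolean configuration entry. -/
def spinC (b : Bool) : ℂ := if b then 1 else -1

/-- The cyclic successor on `Fin N` (periodic boundary conditions
`σ_{N+1} = σ_1`). -/
def nextIdx {N : ℕ} (j : Fin N) : Fin N := ⟨(j.val + 1) % N, Nat.mod_lt _ j.pos⟩

/-- The partition function of the one-dimensional ferromagnetic
nearest-neighbor Ising model on `N` sites with couplings `J_1, …, J_N`,
temperature `τ`, Boltzmann constant `k_B`, (complex) magnetic field `H` and
periodic boundary conditions:
`Z_τ^{(N)}(H) = Σ_{σ ∈ {±1}^N} exp((1/(k_B τ)) Σ_j (J_j σ_j σ_{j+1} + H σ_j))`. -/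
def isingZ (N : ℕ) (J : ℕ → ℝ) (kB τ : ℝ) (H : ℂ) : ℂ :=
  ∑ σ : Fin N → Bool,
    Complex.exp ((1 / ((kB * τ : ℝ) : ℂ)) *
      ∑ j : Fin N,
        (((J (j.val + 1) : ℝ) : ℂ) * spinC (σ j) * spinC (σ (nextIdx j)) + H * spinC (σ j)))

/-- The open arc `R_a = {e^{iθ} : −2 arcsin a < θ < 2 arcsin a}` around 1. -/
def arcR (a : ℝ) : Set ℂ :=
  {z | ∃ θ : ℝ, -(2 * Real.arcsin a) < θ ∧ θ < 2 * Real.arcsin a ∧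
    z = Complex.exp (θ * Complex.I)}

end

/-!
Only `w = e^{iφ}` with `w² = e^{2H/(k_B τ)}` matters, since `w ↦ -w` changes the sign of every
transfer matrix. With `p = e^K`, `q = e^{-K}` and `u² = w`, the transfer matrix is

  `diag(w, w⁻¹) (p + q X) = D (p diag(w, w⁻¹) + q X) D⁻¹`,  `D = diag(u, u⁻¹)`,

where `X` is the spin flip. Conjugation by `1 + i X` fixes `X` and turns `diag(w, w⁻¹)` into the
rotation by `φ`, so all transfer matrices become simultaneously real, with diagonal entries
`p cos φ` and off-diagonal entries `q ∓ p sin φ`. On the arc `|sin φ| < α ≤ q / p` and `cos φ > 0`,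
so these entries are positive, and so is the trace of any product of such matrices.
-/

open Matrix

section EntrywisePositivity

variable {ι R : Type*} [Fintype ι] [DecidableEq ι]
  [Semiring R] [PartialOrder R] [IsStrictOrderedRing R]

/-- The entrywise nonnegative matrices with positive diagonal. Unlike the entrywise positive
matrices, they contain the identity and hence all list products of their elements. -/
def nonnegPosDiag (ι R : Type*) [Fintype ι] [DecidableEq ι]
    [Semiring R] [PartialOrder R] [IsStrictOrderedRing R] : Submonoid (Matrix ι ι R) where
  carrier := {A | (∀ i j, 0 ≤ A i j) ∧ ∀ i, 0 < A i i}
  one_mem' := ⟨fun i j => by rw [one_apply]; split_ifs <;> simp, fun i => by simp⟩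
  mul_mem' := by
    rintro A B ⟨hA, hA'⟩ ⟨hB, hB'⟩
    exact ⟨fun i j => Finset.sum_nonneg fun k _ => mul_nonneg (hA i k) (hB k j),
      fun i => Finset.sum_pos' (fun k _ => mul_nonneg (hA i k) (hB k i))
        ⟨i, Finset.mem_univ i, mul_pos (hA' i) (hB' i)⟩⟩

lemma mem_nonnegPosDiag_of_pos {A : Matrix ι ι R} (hA : ∀ i j, 0 < A i j) :
    A ∈ nonnegPosDiag ι R :=
  ⟨fun i j => (hA i j).le, fun i => hA i i⟩

lemma trace_pos_of_mem_nonnegPosDiag [Nonempty ι] {A : Matrix ι ι R}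
    (hA : A ∈ nonnegPosDiag ι R) : 0 < A.trace :=
  Finset.sum_pos (fun i _ => hA.2 i) Finset.univ_nonempty

lemma trace_prod_smul_conj_ne_zero [Nonempty ι] {A : Type*} [CommSemiring A] [NoZeroDivisors A]
    {f : R →+* A} (hf : Function.Injective f) (P : (Matrix ι ι A)ˣ) {c : A} (hc : c ≠ 0)
    {L : List (Matrix ι ι R)} (hL : ∀ B ∈ L, B ∈ nonnegPosDiag ι R) :
    (L.map fun B => c • ((P : Matrix ι ι A) * f.mapMatrix B * (↑P⁻¹ : Matrix ι ι A))).prod.trace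
      ≠ 0 := by
  have map_factor :
      (L.map fun B => c • ((P : Matrix ι ι A) * f.mapMatrix B * (↑P⁻¹ : Matrix ι ι A))) =
        ((L.map f.mapMatrix).map (ConjAct.toConjAct P • ·)).map (c • ·) := by
    simp only [List.map_map, Function.comp_def, ConjAct.units_smul_def, ConjAct.ofConjAct_toConjAct]
  have trace_pos : 0 < L.prod.trace :=
    trace_pos_of_mem_nonnegPosDiag ((nonnegPosDiag ι R).list_prod_mem hL)
  rw [map_factor, ← List.smul_prod, ← List.smul_prod', ← map_list_prod, ConjAct.units_smul_def,
    ConjAct.ofConjAct_toConjAct, trace_smul, trace_units_conj, RingHom.mapMatrix_apply,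
    ← AddMonoidHom.map_trace f, smul_eq_mul]
  exact mul_ne_zero (pow_ne_zero _ hc) ((map_ne_zero_iff f hf).2 trace_pos.ne')

end EntrywisePositivity

lemma trace_prod_ofFn_mul_eq_sum_paths {S R : Type*} [Fintype S] [DecidableEq S] [CommSemiring R]
    {n : ℕ} (T : Fin n → Matrix S S R) (X : Matrix S S R) :
    ((List.ofFn T).prod * X).trace =
      ∑ σ : Fin (n + 1) → S, (∏ j, T j (σ j.castSucc) (σ j.succ)) * X (σ (Fin.last n)) (σ 0) := by
  induction n generalizing X with
  | zero => exact Fintype.sum_equiv (Equiv.funUnique (Fin 1) S).symm _ _ fun a => by simp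
  | succ n ih =>
    rw [List.ofFn_succ, List.prod_cons, Matrix.mul_assoc, trace_mul_comm, Matrix.mul_assoc, ih,
      ← (Fin.consEquiv fun _ : Fin (n + 2) => S).sum_comp, Fintype.sum_prod_type_right]
    refine Finset.sum_congr rfl fun σ _ => ?_
    rw [mul_apply, Finset.mul_sum]
    refine Finset.sum_congr rfl fun a _ => ?_
    simp only [Fin.consEquiv_apply, Fin.cons_succ, Fin.prod_univ_succ, Fin.castSucc_zero,
      Fin.cons_zero, Fin.castSucc_succ, Fin.cons_last]
    ring

lemma trace_prod_ofFn_eq_sum_cycles {S R : Type*} [Fintype S] [DecidableEq S] [CommSemiring R]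
    {n : ℕ} (T : Fin (n + 1) → Matrix S S R) :
    (List.ofFn T).prod.trace = ∑ σ : Fin (n + 1) → S, ∏ j, T j (σ j) (σ (j + 1)) := by
  rw [List.ofFn_succ', List.concat_eq_append, List.prod_append, List.prod_singleton,
    trace_prod_ofFn_mul_eq_sum_paths]
  simp only [Fin.prod_univ_castSucc, Fin.coeSucc_eq_succ, Fin.last_add_one]

/-- The transfer matrix of the Ising chain at reduced coupling `K = J / (k_B τ)` and fugacity
`z = e^{H / (k_B τ)}`; the field factor is attached to the row spin only. -/
noncomputable def transferMatrix (z : ℂ) (K : ℝ) : Matrix Bool Bool ℂ :=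
  of fun a b => (if a then z else z⁻¹) * Complex.exp (K * spinC a * spinC b)

lemma transferMatrix_neg (z : ℂ) (K : ℝ) : transferMatrix (-z) K = -transferMatrix z K := by
  ext a b
  cases a <;> simp [transferMatrix]

lemma nextIdx_eq_add_one {n : ℕ} (j : Fin (n + 1)) : nextIdx j = j + 1 := by
  ext
  simp [nextIdx, Fin.val_add]

lemma isingZ_succ_eq_trace (n : ℕ) (J : ℕ → ℝ) (kB τ : ℝ) (H : ℂ) :
    isingZ (n + 1) J kB τ H =
      ((List.ofFn fun j : Fin (n + 1) => J (j + 1) / (kB * τ)).map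
        (transferMatrix (Complex.exp (H / (kB * τ : ℝ))))).prod.trace := by
  rw [List.map_ofFn, trace_prod_ofFn_eq_sum_cycles, isingZ]
  refine Finset.sum_congr rfl fun σ _ => ?_
  rw [Finset.mul_sum, Complex.exp_sum]
  refine Finset.prod_congr rfl fun j _ => ?_
  have field_factor : (if σ j then Complex.exp (H / (kB * τ : ℝ))
      else (Complex.exp (H / (kB * τ : ℝ)))⁻¹) = Complex.exp (H / (kB * τ : ℝ) * spinC (σ j)) := by
    cases σ j <;> simp [spinC, Complex.exp_neg]
  simp only [Function.comp_apply, transferMatrix, of_apply, field_factor, nextIdx_eq_add_one,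
    ← Complex.exp_add]
  congr 1
  push_cast
  ring

/-- The real form of `transferMatrix (e^{iφ}) K`, that is `e^K` times the rotation by `φ` plus
`e^{-K}` times the spin flip. -/
noncomputable def realTransferMatrix (φ K : ℝ) : Matrix Bool Bool ℝ :=
  of fun a b =>
    if a = b then Real.exp K * Real.cos φ
    else Real.exp (-K) + (if a then -1 else 1) * (Real.exp K * Real.sin φ)

lemma realTransferMatrix_pos {φ K : ℝ} (hcos : 0 < Real.cos φ)
    (hsin : |Real.sin φ| < Real.exp (-2 * K)) (a b : Bool) : 0 < realTransferMatrix φ K a b := by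
  have hpq : |Real.exp K * Real.sin φ| < Real.exp (-K) := by
    calc |Real.exp K * Real.sin φ| = Real.exp K * |Real.sin φ| := by
          rw [abs_mul, Real.abs_exp]
      _ < Real.exp K * Real.exp (-2 * K) := by gcongr
      _ = Real.exp (-K) := by rw [← Real.exp_add]; ring_nf
  have hdiag : 0 < Real.exp K * Real.cos φ := mul_pos (Real.exp_pos K) hcos
  obtain ⟨hlower, hupper⟩ := abs_lt.1 hpq
  cases a <;> cases b <;>
    simp only [realTransferMatrix, of_apply, ite_mul, neg_mul, one_mul, Bool.false_eq_true,
      Bool.true_eq_false, ↓reduceIte] <;>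
    linarith

/-- The matrix `diag(u, u⁻¹) (1 + i X)` with `X` the spin flip; for `u = e^{iφ/2}` it conjugates
`realTransferMatrix φ K` into `transferMatrix (e^{iφ}) K`, for every `K`. -/
noncomputable def realFormConjugator (u : ℂˣ) : (Matrix Bool Bool ℂ)ˣ where
  val := of fun a b => (if a then ↑u else ↑u⁻¹) * (if a = b then 1 else Complex.I)
  inv := of fun a b => (if b then ↑u⁻¹ else ↑u) * (if a = b then 1 else -Complex.I) / 2
  val_inv := by
    ext a b
    cases a <;> cases b <;>
      simp only [mul_apply, one_apply, of_apply, Fintype.sum_bool, Units.val_inv_eq_inv_val,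
        Bool.false_eq_true, Bool.true_eq_false, ↓reduceIte] <;>
      grind [Complex.I_sq, u.ne_zero]
  inv_val := by
    ext a b
    cases a <;> cases b <;>
      simp only [mul_apply, one_apply, of_apply, Fintype.sum_bool, Units.val_inv_eq_inv_val,
        Bool.false_eq_true, Bool.true_eq_false, ↓reduceIte] <;>
      grind [Complex.I_sq, u.ne_zero]

lemma transferMatrix_eq_conj_realTransferMatrix (φ K : ℝ) {u : ℂˣ}
    (hu : (u : ℂ) ^ 2 = Complex.exp (φ * Complex.I)) :
    transferMatrix (Complex.exp (φ * Complex.I)) K =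
      realFormConjugator u * Complex.ofRealHom.mapMatrix (realTransferMatrix φ K) *
        (↑(realFormConjugator u)⁻¹ : Matrix Bool Bool ℂ) := by
  have hu_inv : ((u : ℂ)⁻¹) ^ 2 = Complex.exp (-φ * Complex.I) := by
    rw [inv_pow, hu, ← Complex.exp_neg, neg_mul]
  have hcos : Complex.cos φ = ((u : ℂ) ^ 2 + (u : ℂ)⁻¹ ^ 2) / 2 := by
    rw [hu, hu_inv, Complex.cos]
  have hsin : Complex.sin φ = ((u : ℂ)⁻¹ ^ 2 - (u : ℂ) ^ 2) * Complex.I / 2 := by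
    rw [hu, hu_inv, Complex.sin]
  have hu0 : (u : ℂ) ≠ 0 := u.ne_zero
  rw [Units.eq_mul_inv_iff_mul_eq, ← hu]
  ext a b
  cases a <;> cases b <;>
    simp only [transferMatrix, realTransferMatrix, realFormConjugator, spinC, mul_apply, of_apply,
      Fintype.sum_bool, RingHom.mapMatrix_apply, map_apply, Complex.ofRealHom_eq_coe,
      Units.val_inv_eq_inv_val, ite_mul, mul_one, mul_neg, neg_neg, neg_mul, one_mul,
      Bool.false_eq_true, Bool.true_eq_false, ↓reduceIte, Complex.ofReal_add, Complex.ofReal_neg,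
      Complex.ofReal_mul, Complex.ofReal_exp, Complex.ofReal_cos, Complex.ofReal_sin, hcos,
      hsin] <;>
    field_simp <;>
    grind [Complex.I_sq]

lemma exists_cos_pos_abs_sin_lt_of_mem_arcR {a : ℝ} {z : ℂ} (hz : z ∈ arcR a) :
    ∃ φ : ℝ, 0 < Real.cos φ ∧ |Real.sin φ| < a ∧ z = Complex.exp (φ * Complex.I) ^ 2 := by
  obtain ⟨θ, hlower, hupper, rfl⟩ := hz
  have harcsin := Real.arcsin_le_pi_div_two a
  refine ⟨θ / 2, Real.cos_pos_of_mem_Ioo ⟨by linarith, by linarith⟩, abs_lt.2 ⟨?_, ?_⟩, ?_⟩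
  · rw [neg_lt, ← Real.sin_neg]
    exact (Real.lt_arcsin_iff_sin_lt' ⟨by linarith, by linarith⟩).1 (by linarith)
  · exact (Real.lt_arcsin_iff_sin_lt' ⟨by linarith, by linarith⟩).1 (by linarith)
  · rw [← Complex.exp_nat_mul]
    push_cast
    ring_nf

lemma trace_prod_transferMatrix_ne_zero {z : ℂ} {φ : ℝ} {L : List ℝ}
    (hz : z ^ 2 = Complex.exp (φ * Complex.I) ^ 2) (hcos : 0 < Real.cos φ)
    (hsin : ∀ K ∈ L, |Real.sin φ| < Real.exp (-2 * K)) :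
    (L.map (transferMatrix z)).prod.trace ≠ 0 := by
  obtain ⟨ε, hε, transfer_eq⟩ : ∃ ε : ℂ, ε ≠ 0 ∧
      ∀ K, transferMatrix z K = ε • transferMatrix (Complex.exp (φ * Complex.I)) K := by
    rcases sq_eq_sq_iff_eq_or_eq_neg.1 hz with rfl | rfl
    · exact ⟨1, one_ne_zero, fun K => (one_smul ℂ _).symm⟩
    · exact ⟨-1, by simp, fun K => by rw [transferMatrix_neg, neg_smul, one_smul]⟩
  let u : ℂˣ := Units.mk0 (Complex.exp ((φ / 2 : ℝ) * Complex.I)) (Complex.exp_ne_zero _)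
  have hu : (u : ℂ) ^ 2 = Complex.exp (φ * Complex.I) := by
    rw [Units.val_mk0, ← Complex.exp_nat_mul]
    push_cast
    ring_nf
  have positive : ∀ B ∈ L.map (realTransferMatrix φ), B ∈ nonnegPosDiag Bool ℝ := by
    rw [List.forall_mem_map]
    exact fun K hK => mem_nonnegPosDiag_of_pos (realTransferMatrix_pos hcos (hsin K hK))
  have trace_ne_zero := trace_prod_smul_conj_ne_zero Complex.ofRealHom.injective
    (realFormConjugator u) hε positive
  simpa only [List.map_map, Function.comp_def,
    ← transferMatrix_eq_conj_realTransferMatrix φ _ hu, ← transfer_eq] using trace_ne_zero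

theorem ising_partition_ne_zero_on_arc_general
    (J : ℕ → ℝ) (τ kB : ℝ) (_hβ : kB * τ ≠ 0) (α : ℝ) (_hα : α ≤ 1) (N : ℕ)
    (hαJ : ∀ j, 1 ≤ j → j ≤ N → α ≤ Real.exp (-2 * J j / (kB * τ))) (H : ℂ)
    (hH : Complex.exp (2 * H / ((kB * τ : ℝ) : ℂ)) ∈ arcR α) :
    isingZ N J kB τ H ≠ 0 := by
  obtain ⟨φ, hcos, hsin, hφ⟩ := exists_cos_pos_abs_sin_lt_of_mem_arcR hH
  rcases N with _ | n
  · simp [isingZ]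
  have fugacity_sq :
      Complex.exp (H / (kB * τ : ℝ)) ^ 2 = Complex.exp (φ * Complex.I) ^ 2 := by
    rw [← hφ, ← Complex.exp_nat_mul, mul_div_assoc, Nat.cast_ofNat]
  rw [isingZ_succ_eq_trace]
  refine trace_prod_transferMatrix_ne_zero fugacity_sq hcos ?_
  rw [List.forall_mem_ofFn_iff]
  intro j
  rw [← mul_div_assoc]
  exact hsin.trans_le (hαJ (j + 1) (by simp) (by lia))

/-- **No Lee–Yang zeros in the arc `R_α`** (Theorem 4.1). Let `(J_j)_{j≥1}` be
positive couplings, `τ, k_B > 0`, and suppose `α ∈ (0,1)` satisfies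
`α ≤ e^{−2J_j/(k_B τ)}` for all `j ≥ 1`. Then for every `N ≥ 1` and every
`H ∈ ℂ` with `e^{2H/(k_B τ)} ∈ R_α`, the partition function `Z_τ^{(N)}(H)` is
nonzero. -/
theorem ising_partition_ne_zero_on_arc
    (J : ℕ → ℝ) (hJ : ∀ j, 1 ≤ j → 0 < J j)
    (τ kB : ℝ) (hτ : 0 < τ) (hkB : 0 < kB)
    (α : ℝ) (hα : α ∈ Set.Ioo (0 : ℝ) 1)
    (hαJ : ∀ j, 1 ≤ j → α ≤ Real.exp (-2 * J j / (kB * τ)))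
    (N : ℕ) (hN : 1 ≤ N) (H : ℂ)
    (hH : Complex.exp (2 * H / ((kB * τ : ℝ) : ℂ)) ∈ arcR α) :
    isingZ N J kB τ H ≠ 0 := by
  exact ising_partition_ne_zero_on_arc_general J τ kB (mul_pos hkB hτ).ne' α hα.2.le N
    (fun j hj _ => hαJ j hj) H hH
end
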